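/- arXiv:1709.10006 — 4 statements merged into one kernel-verified Lean document; each statement's English description precedes it below -/
import Mathlib

section
/- (Expander mixing lemma for multisets.) Let G be a d-regular simple graph on n vertices with λ(G) ≤ λ. Let v, w : V(G) → ℝ≥0 be weight functions (multiplicities), and set |V| = Σₓ v(x), |W| = Σᵧ w(y) and e(V, W) = Σ_{x,y adjacent in G} v(x)·w(y). Then |e(V, W) − (d/n)|V||W|| ≤ λ·√((Σₓ v(x)² − |V|²/n)·(Σᵧ w(y)² − |W|²/n)). -/
open scoped Matrix

/-- The Euclidean (ℓ²) norm of a finitely-supported real vector. -/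
noncomputable def l2norm {α : Type*} [Fintype α] (v : α → ℝ) : ℝ :=
  Real.sqrt (∑ x, v x ^ 2)

open Classical in
/-- The (real) adjacency matrix of a graph. -/
noncomputable def adjMat {α : Type*} [Fintype α] (G : SimpleGraph α) : Matrix α α ℝ :=
  fun x y => if G.Adj x y then 1 else 0

/-- For a regular graph, `λ(G) ≤ lam` (all eigenvalues other than the largest are
at most `lam` in absolute value) is equivalent to the adjacency operator contracting
by a factor `lam` on the space of mean-zero vectors. -/
def eigBound {α : Type*} [Fintype α] (G : SimpleGraph α) (lam : ℝ) : Prop :=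
  ∀ v : α → ℝ, (∑ x, v x) = 0 → l2norm (adjMat G *ᵥ v) ≤ lam * l2norm v

/-
Replacing both weights by their deviations from the mean (`Fintype.balance`) lowers `e(V, W)` by
exactly `(d/n)|V||W|`, because the constant vectors are left and right eigenvectors of the adjacency
matrix with eigenvalue `d`. The adjacency matrix scales the norm of a deviation by at most `lam`, so
Cauchy–Schwarz bounds what is left; for the identity matrix, the same replacement computes the
squared norm of a deviation as `∑ v x ^ 2 - |V| ^ 2 / n`.
-/

open Finset Fintype Matrix
open scoped BigOperators

section Balance

variable {m n K : Type*} [Fintype m] [Fintype n] [Field K] [CharZero K]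

theorem balance_eq_sub_smul_one (v : m → K) : balance v = v - (𝔼 i, v i) • 1 := by
  ext i
  simp [balance_apply]

theorem balance_dotProduct_mulVec_balance {A : Matrix m n K} {r c : K}
    (hrow : A *ᵥ 1 = r • 1) (hcol : 1 ᵥ* A = c • 1) (v : m → K) (w : n → K) :
    balance v ⬝ᵥ A *ᵥ balance w =
      v ⬝ᵥ A *ᵥ w - r / card n * (∑ i, v i) * ∑ j, w j := by
  have one_dotProduct_mulVec : 1 ⬝ᵥ A *ᵥ balance w = 0 := by
    rw [dotProduct_mulVec, hcol, smul_dotProduct, one_dotProduct, sum_balance, smul_zero]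
  calc balance v ⬝ᵥ A *ᵥ balance w
      = v ⬝ᵥ A *ᵥ balance w := by
        rw [balance_eq_sub_smul_one v, sub_dotProduct, smul_dotProduct, one_dotProduct_mulVec,
          smul_zero, sub_zero]
    _ = v ⬝ᵥ A *ᵥ w - (𝔼 j, w j) * (r * ∑ i, v i) := by
        rw [balance_eq_sub_smul_one w, mulVec_sub, mulVec_smul, hrow, dotProduct_sub,
          dotProduct_smul, dotProduct_smul, dotProduct_one, smul_eq_mul, smul_eq_mul]
    _ = v ⬝ᵥ A *ᵥ w - r / card n * (∑ i, v i) * ∑ j, w j := by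
        rw [Fintype.expect_eq_sum_div_card]
        ring

theorem sum_balance_sq (v : m → K) :
    ∑ i, balance v i ^ 2 = ∑ i, v i ^ 2 - (∑ i, v i) ^ 2 / card m := by
  classical
  calc ∑ i, balance v i ^ 2
      = balance v ⬝ᵥ (1 : Matrix m m K) *ᵥ balance v := by
        simp only [one_mulVec, dotProduct, sq]
    _ = v ⬝ᵥ (1 : Matrix m m K) *ᵥ v - 1 / card m * (∑ i, v i) * ∑ i, v i :=
        balance_dotProduct_mulVec_balance (c := 1) (by rw [one_mulVec, one_smul])
          (by rw [vecMul_one, one_smul]) v v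
    _ = ∑ i, v i ^ 2 - (∑ i, v i) ^ 2 / card m := by
        simp only [one_mulVec, dotProduct, ← sq]
        ring

end Balance

section Mixing

variable {m n : Type*} [Fintype m] [Fintype n]

theorem abs_dotProduct_le_l2norm_mul_l2norm (v w : m → ℝ) :
    |v ⬝ᵥ w| ≤ l2norm v * l2norm w := by
  rw [l2norm, l2norm, ← Real.sqrt_mul (sum_nonneg fun _ _ ↦ sq_nonneg _)]
  exact Real.abs_le_sqrt (sum_mul_sq_le_sq_mul_sq _ _ _)

theorem l2norm_balance_mul_l2norm_balance (v : m → ℝ) (w : n → ℝ) :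
    l2norm (balance v) * l2norm (balance w) =
      √((∑ i, v i ^ 2 - (∑ i, v i) ^ 2 / card m) * (∑ j, w j ^ 2 - (∑ j, w j) ^ 2 / card n)) := by
  rw [← sum_balance_sq, ← sum_balance_sq, Real.sqrt_mul (sum_nonneg fun _ _ ↦ sq_nonneg _),
    l2norm, l2norm]

theorem abs_dotProduct_mulVec_sub_le {A : Matrix m n ℝ} {r c lam : ℝ}
    (hrow : A *ᵥ 1 = r • 1) (hcol : 1 ᵥ* A = c • 1)
    (hlam : ∀ u : n → ℝ, ∑ j, u j = 0 → l2norm (A *ᵥ u) ≤ lam * l2norm u)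
    (v : m → ℝ) (w : n → ℝ) :
    |v ⬝ᵥ A *ᵥ w - r / card n * (∑ i, v i) * ∑ j, w j| ≤
      lam *
        √((∑ i, v i ^ 2 - (∑ i, v i) ^ 2 / card m) *
          (∑ j, w j ^ 2 - (∑ j, w j) ^ 2 / card n)) := by
  rw [← balance_dotProduct_mulVec_balance hrow hcol, ← l2norm_balance_mul_l2norm_balance]
  calc |balance v ⬝ᵥ A *ᵥ balance w|
      ≤ l2norm (balance v) * l2norm (A *ᵥ balance w) := abs_dotProduct_le_l2norm_mul_l2norm _ _
    _ ≤ l2norm (balance v) * (lam * l2norm (balance w)) :=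
        mul_le_mul_of_nonneg_left (hlam _ (sum_balance w)) (Real.sqrt_nonneg _)
    _ = lam * (l2norm (balance v) * l2norm (balance w)) := mul_left_comm _ _ _

end Mixing

section AdjMat

variable {α : Type*} [Fintype α] (G : SimpleGraph α)

theorem adjMat_eq_adjMatrix [DecidableRel G.Adj] : adjMat G = G.adjMatrix ℝ := by
  ext x y
  rw [adjMat, SimpleGraph.adjMatrix_apply]
  congr

theorem one_vecMul_adjMat : 1 ᵥ* adjMat G = adjMat G *ᵥ 1 := by
  classical
  rw [adjMat_eq_adjMatrix, ← mulVec_transpose, SimpleGraph.transpose_adjMatrix]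

variable {G} in
theorem adjMat_mulVec_one {d : ℕ} (hreg : ∀ x, (G.neighborSet x).ncard = d) :
    adjMat G *ᵥ 1 = (d : ℝ) • 1 := by
  classical
  ext x
  have hdegree : G.degree x = d := by
    rw [← G.card_neighborSet_eq_degree, ← Nat.card_eq_fintype_card, Nat.card_coe_set_eq, hreg]
  rw [adjMat_eq_adjMatrix]
  simp [hdegree]

end AdjMat

open Classical in
theorem expander_mixing_multiset_general {α : Type*} [Fintype α] (G : SimpleGraph α) (d : ℕ)
    (hreg : ∀ x : α, (G.neighborSet x).ncard = d)
    (lam : ℝ) (hlam : eigBound G lam)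
    (v w : α → ℝ) :
    |(∑ x : α, ∑ y : α, if G.Adj x y then v x * w y else 0) -
        (d / Fintype.card α) * (∑ x, v x) * (∑ y, w y)| ≤
      lam * Real.sqrt
        ((∑ x, v x ^ 2 - (∑ x, v x) ^ 2 / Fintype.card α) *
          (∑ y, w y ^ 2 - (∑ y, w y) ^ 2 / Fintype.card α)) := by
  have hrow : adjMat G *ᵥ 1 = (d : ℝ) • 1 := adjMat_mulVec_one hreg
  have hcol : 1 ᵥ* adjMat G = (d : ℝ) • 1 := (one_vecMul_adjMat G).trans hrow
  rw [← G.dotProduct_mulVec_adjMatrix, ← adjMat_eq_adjMatrix]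
  exact abs_dotProduct_mulVec_sub_le hrow hcol hlam v w

open Classical in
theorem expander_mixing_multiset {α : Type*} [Fintype α] (G : SimpleGraph α) (d : ℕ)
    (hreg : ∀ x : α, (G.neighborSet x).ncard = d)
    (lam : ℝ) (hlam : eigBound G lam)
    (v w : α → ℝ) (hv : ∀ x, 0 ≤ v x) (hw : ∀ x, 0 ≤ w x) :
    |(∑ x : α, ∑ y : α, if G.Adj x y then v x * w y else 0) -
        (d / Fintype.card α) * (∑ x, v x) * (∑ y, w y)| ≤
      lam * Real.sqrt
        ((∑ x, v x ^ 2 - (∑ x, v x) ^ 2 / Fintype.card α) *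
          (∑ y, w y ^ 2 - (∑ y, w y) ^ 2 / Fintype.card α)) :=
  expander_mixing_multiset_general G d hreg lam hlam v w
end

section
/- (de Caen's inequality.) For any simple graph with n ≥ 2 vertices, m edges and vertex degrees d₁, d₂, …, dₙ, one has Σᵢ dᵢ² ≤ m·(2m/(n − 1) + n − 2). -/
/-!
If at least `|s|` edges leave a vertex set `s`, then
`(n - 1) (|s|² + ∑_{y ∈ s} d_y) ≤ |s| (2m + (n - 1) (n - 2))`: count the edge ends inside `s`,
across the boundary of `s` and outside `s`; the resulting inequality is affine in the size of the
boundary, which lies between `|s|` and `|s| |sᶜ|`, so it need only be tested at these two values.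
The neighbourhood of a vertex `v` qualifies, since `v` itself is adjacent to all of it. Summing over
`v` turns both `∑_v d_v²` and `∑_v ∑_{y ~ v} d_y` into the sum of the squared degrees.
-/

open Finset

section Interedges

variable {α : Type*} (G : SimpleGraph α) [DecidableRel G.Adj]

lemma card_interedges_self_add_card_le_sq (s : Finset α) :
    #(G.interedges s s) + #s ≤ #s ^ 2 := by
  classical
  have hsub : G.interedges s s ⊆ s.offDiag := fun e he ↦
    have ⟨h₁, h₂, hadj⟩ := G.mem_interedges_iff.mp he
    mem_offDiag.mpr ⟨h₁, h₂, hadj.ne⟩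
  calc #(G.interedges s s) + #s ≤ #s.offDiag + #s := by gcongr
    _ = #s ^ 2 := by
      rw [offDiag_card, Nat.sub_add_cancel (Nat.le_mul_self _), sq]

lemma card_le_card_interedges_of_forall_adj {s t : Finset α} {v : α} (hv : v ∈ t)
    (hs : ∀ y ∈ s, G.Adj y v) : #s ≤ #(G.interedges s t) :=
  card_le_card_of_injOn (·, v) (fun y hy ↦ G.mk_mem_interedges_iff.mpr ⟨hy, hv, hs y hy⟩)
    (Prod.mk_left_injective v).injOn

variable [Fintype α]

lemma card_interedges_univ_right (s : Finset α) :
    #(G.interedges s univ) = ∑ v ∈ s, G.degree v := by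
  simp only [G.interedges_def, card_filter, sum_product, ← G.card_neighborFinset_eq_degree,
    G.neighborFinset_eq_filter]

lemma card_interedges_le_sum_degree_right (s t : Finset α) :
    #(G.interedges s t) ≤ ∑ v ∈ t, G.degree v := by
  have := G.symm
  calc #(G.interedges s t) = #(G.interedges t s) := Rel.card_interedges_comm s t
    _ ≤ #(G.interedges t univ) := card_le_card (G.interedges_mono subset_rfl (subset_univ s))
    _ = ∑ v ∈ t, G.degree v := card_interedges_univ_right G t

lemma card_interedges_self_add_card_interedges_compl [DecidableEq α] (s : Finset α) :
    #(G.interedges s s) + #(G.interedges s sᶜ) = ∑ v ∈ s, G.degree v := by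
  have hunion : G.interedges s univ = G.interedges s s ∪ G.interedges s sᶜ := by
    simp only [G.interedges_def, ← filter_union, ← product_union, union_compl]
  rw [← card_interedges_univ_right, hunion,
    card_union_of_disjoint (G.interedges_disjoint_right s disjoint_compl_right)]

end Interedges

-- With `|s| = a`, `|sᶜ| = b` and `c` boundary edges, this is the slack in
-- `card_sub_one_mul_card_sq_add_sum_degree_le` when `s` is a clique and `sᶜ` is independent,
-- written as an interpolation between its values at `c = a` and `c = a * b`.
lemma boundary_slack_nonneg {a b c : ℕ} (hac : a ≤ c) (hcab : c ≤ a * b) :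
    0 ≤ ((c : ℤ) - a) * (a - 1) + (a * b - c) * (b - 2) := by
  have hac' : (a : ℤ) ≤ c := mod_cast hac
  have hcab' : (c : ℤ) ≤ a * b := mod_cast hcab
  rcases Nat.eq_zero_or_pos a with rfl | ha
  · obtain rfl : c = 0 := by lia
    simp
  have hb : 1 ≤ b := Nat.pos_of_mul_pos_left (by lia : 0 < a * b)
  have hleft : 0 ≤ ((c : ℤ) - a) * (a - 1) := mul_nonneg (by lia) (by lia)
  rcases hb.eq_or_lt with rfl | hb
  · obtain rfl : c = a := by lia
    simp
  have hright : 0 ≤ ((a : ℤ) * b - c) * (b - 2) := mul_nonneg (by lia) (by lia)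
  exact add_nonneg hleft hright

section Degree

variable {α : Type*} [Fintype α] (G : SimpleGraph α) [DecidableRel G.Adj]

lemma card_sub_one_mul_card_sq_add_sum_degree_le [DecidableEq α] {s : Finset α}
    (hs : #s ≤ #(G.interedges s sᶜ)) :
    ((Fintype.card α : ℤ) - 1) * (#s ^ 2 + ∑ v ∈ s, (G.degree v : ℤ)) ≤
      #s * (∑ v, (G.degree v : ℤ) + (Fintype.card α - 1) * (Fintype.card α - 2)) := by
  rcases s.eq_empty_or_nonempty with rfl | hne
  · simp
  have hboundary : #(G.interedges s sᶜ) ≤ #s * #sᶜ := G.card_interedges_le_mul s sᶜ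
  have hslack := boundary_slack_nonneg hs hboundary
  have hinside : (#(G.interedges s s) : ℤ) + #s ≤ #s ^ 2 :=
    mod_cast card_interedges_self_add_card_le_sq G s
  have hends : (#(G.interedges s s) : ℤ) + #(G.interedges s sᶜ) = ∑ v ∈ s, (G.degree v : ℤ) :=
    mod_cast card_interedges_self_add_card_interedges_compl G s
  have houtside : (#(G.interedges s sᶜ) : ℤ) ≤ ∑ v ∈ sᶜ, (G.degree v : ℤ) :=
    mod_cast card_interedges_le_sum_degree_right G s sᶜ
  have hcompl : (1 : ℤ) ≤ #sᶜ :=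
    mod_cast Nat.pos_of_mul_pos_left (hne.card_pos.trans_le (hs.trans hboundary))
  have hcard : (Fintype.card α : ℤ) = #s + #sᶜ := mod_cast (card_add_card_compl s).symm
  rw [← sum_add_sum_compl s, hcard, ← hends]
  have houtside_mul := mul_le_mul_of_nonneg_left houtside (Int.natCast_nonneg #s)
  have hinside_mul := mul_le_mul_of_nonneg_left hinside (sub_nonneg.mpr hcompl)
  linarith

lemma card_sub_one_mul_degree_sq_add_sum_degree_le (v : α) :
    ((Fintype.card α : ℤ) - 1) *
        ((G.degree v : ℤ) ^ 2 + ∑ w ∈ G.neighborFinset v, (G.degree w : ℤ)) ≤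
      G.degree v * (∑ w, (G.degree w : ℤ) + (Fintype.card α - 1) * (Fintype.card α - 2)) := by
  classical
  have hv : v ∈ (G.neighborFinset v)ᶜ := mem_compl.mpr (G.notMem_neighborFinset_self v)
  have hadj : ∀ w ∈ G.neighborFinset v, G.Adj w v := fun w hw ↦
    ((G.mem_neighborFinset v w).mp hw).symm
  rw [← G.card_neighborFinset_eq_degree v]
  exact card_sub_one_mul_card_sq_add_sum_degree_le G
    (card_le_card_interedges_of_forall_adj G hv hadj)

lemma sum_sum_neighborFinset {M : Type*} [AddCommMonoid M] (f : α → M) :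
    ∑ v, ∑ w ∈ G.neighborFinset v, f w = ∑ w, G.degree w • f w := by
  have hmem (v w : α) :
      v ∈ univ ∧ w ∈ G.neighborFinset v ↔ v ∈ G.neighborFinset w ∧ w ∈ univ := by
    simp [G.adj_comm]
  rw [sum_comm' hmem]
  simp only [sum_const, G.card_neighborFinset_eq_degree]

lemma card_sub_one_mul_sum_degree_sq_le :
    ((Fintype.card α : ℤ) - 1) * ∑ v, (G.degree v : ℤ) ^ 2 ≤
      #G.edgeFinset * (2 * #G.edgeFinset + (Fintype.card α - 1) * (Fintype.card α - 2)) := by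
  have hdegrees : ∑ v, (G.degree v : ℤ) = 2 * #G.edgeFinset :=
    mod_cast G.sum_degrees_eq_twice_card_edges
  have hneighbors :
      ∑ v, ∑ w ∈ G.neighborFinset v, (G.degree w : ℤ) = ∑ v, (G.degree v : ℤ) ^ 2 := by
    simp only [sum_sum_neighborFinset, nsmul_eq_mul, sq]
  have htotal := sum_le_sum fun v (_ : v ∈ univ) ↦ card_sub_one_mul_degree_sq_add_sum_degree_le G v
  rw [← mul_sum, ← sum_mul, sum_add_distrib, hneighbors, hdegrees] at htotal
  linarith

end Degree

theorem deCaen {α : Type*} [Fintype α] (G : SimpleGraph α) (hn : 2 ≤ Fintype.card α) :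
    (∑ x : α, ((G.neighborSet x).ncard : ℝ) ^ 2) ≤
      (G.edgeSet.ncard : ℝ) *
        (2 * G.edgeSet.ncard / (Fintype.card α - 1) + Fintype.card α - 2) := by
  classical
  have hdeg (x : α) : (G.neighborSet x).ncard = G.degree x := by
    rw [← Nat.card_coe_set_eq, Nat.card_eq_fintype_card, G.card_neighborSet_eq_degree]
  have hedge : G.edgeSet.ncard = #G.edgeFinset := by
    rw [← G.coe_edgeFinset, Set.ncard_coe_finset]
  have hpos : (0 : ℝ) < Fintype.card α - 1 := sub_pos.mpr (mod_cast hn)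
  have hle : ((Fintype.card α : ℝ) - 1) * ∑ v, (G.degree v : ℝ) ^ 2 ≤
      #G.edgeFinset * (2 * #G.edgeFinset + (Fintype.card α - 1) * (Fintype.card α - 2)) :=
    mod_cast card_sub_one_mul_sum_degree_sq_le G
  simp only [hdeg, hedge]
  calc ∑ v, (G.degree v : ℝ) ^ 2
      ≤ #G.edgeFinset * (2 * #G.edgeFinset + (Fintype.card α - 1) * (Fintype.card α - 2)) /
          (Fintype.card α - 1) := (le_div_iff₀' hpos).mpr hle
    _ = #G.edgeFinset *
          (2 * #G.edgeFinset / (Fintype.card α - 1) + Fintype.card α - 2) := by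
        field_simp
        ring
end

section
/- Let G be a D-regular simple graph on N vertices with D ≥ 1, let λ = max_{i ≠ 1} |λᵢ| where λ₁ ≥ λ₂ ≥ … ≥ λ_N are the eigenvalues of the adjacency matrix A of G (so λ₁ = D), and let p₀ : V(G) → [0, 1] be a probability distribution (Σₓ p₀(x) = 1). Define pᵢ = (A/D)ⁱ p₀. Then for every i ∈ ℕ, ‖pᵢ − u‖₂ ≤ (λ/D)ⁱ, where u is the uniform distribution assigning 1/N to every vertex and ‖·‖₂ is the Euclidean norm on ℝ^{V(G)}. -/
open scoped Matrix

lemma adjMat_isHermitian {α : Type*} [Fintype α] (G : SimpleGraph α) :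
    (adjMat G).IsHermitian := by
  unfold Matrix.IsHermitian
  ext x y
  by_cases h : G.Adj x y
  · simp [adjMat, Matrix.conjTranspose_apply, h, h.symm]
  · have h' : ¬ G.Adj y x := fun hyx => h hyx.symm
    simp [adjMat, Matrix.conjTranspose_apply, h, h']

/-!
The all-ones vector `𝟙` is an eigenvector of `A` with eigenvalue `D`, and by Gershgorin no
eigenvalue exceeds `D` in absolute value. Set one eigenvalue `ν j₀` aside and let `c` bound the
absolute values of the others. Then `A` contracts `𝟙ᗮ` by `c`: if `D ≤ c`, then `c` bounds all
eigenvalues; if `c < D`, every eigenvector `b j` with `j ≠ j₀` has an eigenvalue different from `D`,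
so `𝟙` is a multiple of `b j₀`, which therefore contributes nothing on `𝟙ᗮ`. The same argument
applies to `Aⁱ` with `cⁱ`. Finally `pᵢ - u = D⁻ⁱ Aⁱ (p₀ - u)`, where `p₀ - u ∈ 𝟙ᗮ` has norm at
most `1`.
-/

section Eigenbasis

open Module.End
open scoped InnerProductSpace

variable {𝕜 E ι : Type*} [RCLike 𝕜] [NormedAddCommGroup E] [InnerProductSpace 𝕜 E] [Fintype ι]
  {T : Module.End 𝕜 E} {b : OrthonormalBasis ι 𝕜 E} {ν : ι → 𝕜} {d : 𝕜} {u v : E} {j₀ : ι} {c : ℝ}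

lemma inner_apply_of_eigenbasis (hb : ∀ j, T (b j) = ν j • b j) (v : E) (j : ι) :
    ⟪b j, T v⟫_𝕜 = ν j * ⟪b j, v⟫_𝕜 := by
  classical
  conv_lhs => rw [← b.sum_repr' v]
  simp [hb, inner_sum, inner_smul_right, b.inner_eq_ite, mul_comm]

lemma norm_apply_le_of_eigenbasis (hb : ∀ j, T (b j) = ν j • b j) (hc : 0 ≤ c)
    (hν : ∀ j, ⟪b j, v⟫_𝕜 ≠ 0 → ‖ν j‖ ≤ c) : ‖T v‖ ≤ c * ‖v‖ := by
  have hcoord (j : ι) : ‖⟪b j, T v⟫_𝕜‖ ≤ c * ‖⟪b j, v⟫_𝕜‖ := by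
    rw [inner_apply_of_eigenbasis hb, norm_mul]
    by_cases hj : ⟪b j, v⟫_𝕜 = 0
    · simp [hj]
    · exact mul_le_mul_of_nonneg_right (hν j hj) (norm_nonneg _)
  refine le_of_sq_le_sq ?_ (by positivity)
  calc ‖T v‖ ^ 2 = ∑ j, ‖⟪b j, T v⟫_𝕜‖ ^ 2 := (b.sum_sq_norm_inner_right _).symm
    _ ≤ ∑ j, (c * ‖⟪b j, v⟫_𝕜‖) ^ 2 := by gcongr with j; exact hcoord j
    _ = (c * ‖v‖) ^ 2 := by
      simp only [mul_pow, ← Finset.mul_sum, b.sum_sq_norm_inner_right]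

lemma inner_eigenbasis_eq_zero_of_ne (hb : ∀ j, T (b j) = ν j • b j) (hu : T u = d • u) {j : ι}
    (hj : ν j ≠ d) : ⟪b j, u⟫_𝕜 = 0 := by
  have h : ν j * ⟪b j, u⟫_𝕜 = d * ⟪b j, u⟫_𝕜 := by
    rw [← inner_apply_of_eigenbasis hb, hu, inner_smul_right]
  exact (mul_eq_mul_right_iff.mp h).resolve_left hj

lemma inner_eigenbasis_eq_zero_of_inner_eq_zero (hb : ∀ j, T (b j) = ν j • b j)
    (hu : T.HasEigenvector d u) (hν : ∀ j ≠ j₀, ν j ≠ d) (huv : ⟪u, v⟫_𝕜 = 0) :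
    ⟪b j₀, v⟫_𝕜 = 0 := by
  have hu_eq : u = ⟪b j₀, u⟫_𝕜 • b j₀ := by
    conv_lhs => rw [← b.sum_repr' u]
    refine Finset.sum_eq_single j₀ (fun j _ hj => ?_) (by simp)
    rw [inner_eigenbasis_eq_zero_of_ne hb hu.apply_eq_smul (hν j hj), zero_smul]
  have hcoord : ⟪b j₀, u⟫_𝕜 ≠ 0 := fun h => hu.2 (by rw [hu_eq, h, zero_smul])
  rw [hu_eq, inner_smul_left] at huv
  exact (mul_eq_zero.mp huv).resolve_left ((map_ne_zero _).mpr hcoord)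

lemma norm_apply_le_of_inner_eigenvector_eq_zero (hb : ∀ j, T (b j) = ν j • b j)
    (hu : T.HasEigenvector d u) (hd : ‖ν j₀‖ ≤ ‖d‖) (hc : 0 ≤ c) (hν : ∀ j ≠ j₀, ‖ν j‖ ≤ c)
    (huv : ⟪u, v⟫_𝕜 = 0) : ‖T v‖ ≤ c * ‖v‖ := by
  refine norm_apply_le_of_eigenbasis hb hc fun j hj => ?_
  obtain rfl | hne := eq_or_ne j j₀
  · by_contra! hcj
    refine hj (inner_eigenbasis_eq_zero_of_inner_eq_zero hb hu (fun k hk hkd => ?_) huv)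
    exact (hcj.trans_le hd).not_ge (hkd ▸ hν k hk)
  · exact hν j hne

lemma norm_pow_apply_le_of_inner_eigenvector_eq_zero (hb : ∀ j, T (b j) = ν j • b j)
    (hu : T.HasEigenvector d u) (hd : ‖ν j₀‖ ≤ ‖d‖) (hc : 0 ≤ c) (hν : ∀ j ≠ j₀, ‖ν j‖ ≤ c)
    (huv : ⟪u, v⟫_𝕜 = 0) (i : ℕ) : ‖(T ^ i) v‖ ≤ c ^ i * ‖v‖ := by
  have hb_pow (j : ι) : (T ^ i) (b j) = ν j ^ i • b j :=
    HasEigenvector.pow_apply ⟨mem_eigenspace_iff.mpr (hb j), b.toBasis.ne_zero j⟩ i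
  have hu_pow : (T ^ i).HasEigenvector (d ^ i) u :=
    ⟨mem_eigenspace_iff.mpr (hu.pow_apply i), hu.2⟩
  refine norm_apply_le_of_inner_eigenvector_eq_zero (j₀ := j₀) hb_pow hu_pow ?_ (by positivity)
    (fun j hj => ?_) huv
  · simpa only [norm_pow] using pow_le_pow_left₀ (norm_nonneg _) hd i
  · simpa only [norm_pow] using pow_le_pow_left₀ (norm_nonneg _) (hν j hj) i

end Eigenbasis

lemma norm_le_of_hasEigenvalue_of_row_sum_le {K n : Type*} [NormedField K] [Fintype n]
    [DecidableEq n] {A : Matrix n n K} {r : ℝ} {μ : K} (hrow : ∀ x, ∑ y, ‖A x y‖ ≤ r)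
    (hμ : Module.End.HasEigenvalue A.toLin' μ) : ‖μ‖ ≤ r := by
  obtain ⟨x, hx⟩ := eigenvalue_mem_ball hμ
  calc ‖μ‖ ≤ ‖A x x‖ + ‖μ - A x x‖ := norm_le_norm_add_norm_sub' _ _
    _ ≤ ‖A x x‖ + ∑ y ∈ Finset.univ.erase x, ‖A x y‖ := by
      gcongr
      exact mem_closedBall_iff_norm.mp hx
    _ = ∑ y, ‖A x y‖ := Finset.add_sum_erase _ (fun y => ‖A x y‖) (Finset.mem_univ x)
    _ ≤ r := hrow x

lemma mulVec_const_of_row_sum_eq {R m n : Type*} [NonUnitalNonAssocSemiring R] [Fintype n]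
    {A : Matrix m n R} {d : R} (hrow : ∀ x, ∑ y, A x y = d) (a : R) :
    (A *ᵥ fun _ => a) = d • fun _ => a := by
  ext x
  simp [Matrix.mulVec, dotProduct, ← Finset.sum_mul, hrow]

lemma smul_pow_mulVec_const {K n : Type*} [Field K] [Fintype n] [DecidableEq n]
    {A : Matrix n n K} {d : K} (hd : d ≠ 0) (hrow : ∀ x, ∑ y, A x y = d) (a : K) (i : ℕ) :
    ((d⁻¹ • A) ^ i *ᵥ fun _ => a) = fun _ => a := by
  induction i with
  | zero => simp
  | succ i ih =>
    rw [pow_succ, ← Matrix.mulVec_mulVec, Matrix.smul_mulVec, mulVec_const_of_row_sum_eq hrow,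
      inv_smul_smul₀ hd, ih]

lemma sum_sub_inv_card {K α : Type*} [DivisionRing K] [CharZero K] [Fintype α] [Nonempty α]
    {p : α → K} (hp : ∑ x, p x = 1) :
    ∑ x, (p - fun _ => (Fintype.card α : K)⁻¹ : α → K) x = 0 := by
  simp [Finset.sum_sub_distrib, hp]

section L2Norm

variable {α : Type*} [Fintype α]

lemma l2norm_eq_norm_toLp (v : α → ℝ) : l2norm v = ‖WithLp.toLp 2 v‖ := by
  simp [l2norm, EuclideanSpace.norm_eq]

lemma l2norm_smul (c : ℝ) (v : α → ℝ) : l2norm (c • v) = |c| * l2norm v := by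
  simp only [l2norm_eq_norm_toLp, WithLp.toLp_smul, norm_smul, Real.norm_eq_abs]

lemma l2norm_sub_inv_card_le_one {p : α → ℝ} (hp : p ∈ stdSimplex ℝ α) :
    l2norm (p - fun _ => (Fintype.card α : ℝ)⁻¹) ≤ 1 := by
  set N : ℝ := (Fintype.card α : ℝ)
  have hsq : ∑ x, p x ^ 2 ≤ 1 := hp.2 ▸ Finset.sum_le_sum fun x _ =>
    pow_le_of_le_one (hp.1 x) (mem_Icc_of_mem_stdSimplex hp x).2 two_ne_zero
  refine Real.sqrt_le_one.mpr ?_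
  calc ∑ x, (p x - N⁻¹) ^ 2
      = ∑ x, p x ^ 2 - 2 * (∑ x, p x) * N⁻¹ + N * N⁻¹ * N⁻¹ := by
        simp only [sub_sq, Finset.sum_add_distrib, Finset.sum_sub_distrib, Finset.sum_const,
          Finset.card_univ, nsmul_eq_mul, ← Finset.sum_mul, ← Finset.mul_sum]
        ring
    _ = ∑ x, p x ^ 2 - N⁻¹ := by
        have hN : N⁻¹ * N * N⁻¹ = N⁻¹ := by simpa only [inv_inv] using mul_inv_mul_cancel N⁻¹
        rw [hp.2]
        linear_combination hN
    _ ≤ 1 := by linarith [show 0 ≤ N⁻¹ by positivity]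

end L2Norm

section NonnegativeMatrix

variable {α : Type*} [Fintype α] [DecidableEq α] {A : Matrix α α ℝ} {d : ℝ}

lemma abs_eigenvalues_le_of_row_sum_le (hA : A.IsHermitian) (hnonneg : ∀ x y, 0 ≤ A x y)
    (hrow : ∀ x, ∑ y, A x y ≤ d) (j : α) : |hA.eigenvalues j| ≤ d := by
  refine norm_le_of_hasEigenvalue_of_row_sum_le (A := A) (fun x => ?_) ?_
  · simp only [Real.norm_of_nonneg (hnonneg x _), hrow x]
  · rw [Module.End.hasEigenvalue_iff_mem_spectrum, Matrix.spectrum_toLin']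
    exact hA.eigenvalues_mem_spectrum_real j

lemma l2norm_pow_mulVec_le_of_sum_eq_zero (hA : A.IsHermitian) (hnonneg : ∀ x y, 0 ≤ A x y)
    (hrow : ∀ x, ∑ y, A x y = d) {j₀ : α} {c : ℝ} (hc : 0 ≤ c)
    (hgap : ∀ j ≠ j₀, |hA.eigenvalues j| ≤ c) {v : α → ℝ} (hv : ∑ x, v x = 0) (i : ℕ) :
    l2norm (A ^ i *ᵥ v) ≤ c ^ i * l2norm v := by
  set T : Module.End ℝ (EuclideanSpace ℝ α) := A.toEuclideanLin
  have hb (j : α) : T (hA.eigenvectorBasis j) = hA.eigenvalues j • hA.eigenvectorBasis j :=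
    congrArg (WithLp.toLp 2) (hA.mulVec_eigenvectorBasis j)
  have hone : T.HasEigenvector d (WithLp.toLp 2 fun _ => 1) := by
    refine ⟨Module.End.mem_eigenspace_iff.mpr ?_, fun h => ?_⟩
    · exact congrArg (WithLp.toLp 2) (mulVec_const_of_row_sum_eq hrow 1)
    · exact one_ne_zero (congrFun (congrArg WithLp.ofLp h) j₀)
  have hbound : ‖hA.eigenvalues j₀‖ ≤ ‖d‖ :=
    (abs_eigenvalues_le_of_row_sum_le hA hnonneg (fun x => (hrow x).le) j₀).trans (le_abs_self d)
  have horth : inner ℝ (WithLp.toLp 2 fun _ => 1) (WithLp.toLp 2 v) = 0 := by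
    simpa [PiLp.inner_apply] using hv
  have hpow : WithLp.toLp 2 (A ^ i *ᵥ v) = (T ^ i) (WithLp.toLp 2 v) := by
    rw [← Matrix.toLpLin_pow, Matrix.toLpLin_toLp, Matrix.toLin'_apply]
  rw [l2norm_eq_norm_toLp, l2norm_eq_norm_toLp, hpow]
  exact norm_pow_apply_le_of_inner_eigenvector_eq_zero hb hone hbound hc hgap horth i

theorem random_walk_mixing_general (hA : A.IsHermitian) (hnonneg : ∀ x y, 0 ≤ A x y)
    (hd : 0 < d) (hrow : ∀ x, ∑ y, A x y = d) {j₀ : α} {c : ℝ} (hc : 0 ≤ c)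
    (hgap : ∀ j ≠ j₀, |hA.eigenvalues j| ≤ c) {p : α → ℝ} (hp : p ∈ stdSimplex ℝ α) (i : ℕ) :
    l2norm ((d⁻¹ • A) ^ i *ᵥ p - fun _ => (Fintype.card α : ℝ)⁻¹) ≤ (c / d) ^ i := by
  have : Nonempty α := ⟨j₀⟩
  set u : α → ℝ := fun _ => (Fintype.card α : ℝ)⁻¹
  have hwalk : (d⁻¹ • A) ^ i *ᵥ p - u = (d⁻¹) ^ i • (A ^ i *ᵥ (p - u)) := by
    rw [← Matrix.smul_mulVec, ← smul_pow, Matrix.mulVec_sub, smul_pow_mulVec_const hd.ne' hrow]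
  calc l2norm ((d⁻¹ • A) ^ i *ᵥ p - u)
      = (d⁻¹) ^ i * l2norm (A ^ i *ᵥ (p - u)) := by
        rw [hwalk, l2norm_smul, abs_of_pos (by positivity)]
    _ ≤ (d⁻¹) ^ i * (c ^ i * l2norm (p - u)) := by
        gcongr
        exact l2norm_pow_mulVec_le_of_sum_eq_zero hA hnonneg hrow hc hgap
          (sum_sub_inv_card hp.2) i
    _ ≤ (d⁻¹) ^ i * (c ^ i * 1) := by
        gcongr
        exact l2norm_sub_inv_card_le_one hp
    _ = (c / d) ^ i := by rw [mul_one, ← mul_pow, div_eq_inv_mul]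

end NonnegativeMatrix

section AdjMat

variable {α : Type*} [Fintype α] (G : SimpleGraph α)

lemma adjMat_nonneg (x y : α) : 0 ≤ adjMat G x y := by
  unfold adjMat
  positivity

lemma sum_adjMat (x : α) : ∑ y, adjMat G x y = (G.neighborSet x).ncard := by
  classical
  simp [adjMat, Finset.sum_boole, Set.ncard_eq_toFinset_card']

end AdjMat

theorem random_walk_mixing {α : Type*} [Fintype α] [DecidableEq α]
    (G : SimpleGraph α) (D : ℕ) (hD : 1 ≤ D)
    (hreg : ∀ x : α, (G.neighborSet x).ncard = D)
    (μ : Fin (Fintype.card α) → ℝ) (hmono : Antitone μ)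
    (e : Fin (Fintype.card α) ≃ α)
    (heig : ∀ i, μ i = (adjMat_isHermitian G).eigenvalues (e i))
    (lam : ℝ) (hlam : IsGreatest {x : ℝ | ∃ i : Fin (Fintype.card α), (i : ℕ) ≠ 0 ∧ x = |μ i|} lam)
    (p₀ : α → ℝ) (hp0 : ∀ x, 0 ≤ p₀ x) (hp1 : (∑ x, p₀ x) = 1) :
    ∀ i : ℕ,
      l2norm ((((D : ℝ)⁻¹ • adjMat G) ^ i) *ᵥ p₀ - fun _ => (Fintype.card α : ℝ)⁻¹) ≤
        (lam / D) ^ i := by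
  obtain ⟨⟨k, -, rfl⟩, hmax⟩ := hlam
  have hgap (j : α) (hj : j ≠ e ⟨0, k.pos⟩) : |(adjMat_isHermitian G).eigenvalues j| ≤ |μ k| :=
    hmax ⟨e.symm j, fun h => hj (e.symm_apply_eq.mp (Fin.ext h)), by simp [heig]⟩
  exact random_walk_mixing_general (adjMat_isHermitian G) (adjMat_nonneg G) (by exact_mod_cast hD)
    (fun x => by rw [sum_adjMat, hreg]) (abs_nonneg _) hgap ⟨hp0, hp1⟩
end

section
/- There exists a constant c > 0 such that every simple graph on d ≥ 3 vertices with at least (3/4)·d(d − 1)/2 edges contains at least c·d³ triangles. -/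
/-!
In any graph with `n` vertices, the ends of an edge `uv` have at least `deg u + deg v - n` common
neighbours, and each of these completes `uv` to a triangle. Every triangle arises from its six
darts, so summing over all darts bounds `∑ v, deg v ^ 2` by `m * n + 3 * t`, where `m` and `t` count
the edges and the triangles. As `∑ v, deg v = 2 * m`, Cauchy–Schwarz turns this into Goodman's
inequality `m * (4 * m - n ^ 2) ≤ 3 * n * t`. Its left-hand side is of order `n ^ 4` once the edge
density exceeds `1 / 2` and `n` is large; density above `2 / 3` makes it positive from `n = 4` on,
and on three vertices it leaves only the triangle.
-/

open Finset SimpleGraph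

section Darts

variable {V : Type*} [Fintype V] (G : SimpleGraph V) [DecidableRel G.Adj]

theorem sum_dart_fst {M : Type*} [AddCommMonoid M] (f : V → M) :
    ∑ d : G.Dart, f d.fst = ∑ v, G.degree v • f v := by
  classical
  rw [← sum_fiberwise univ (fun d : G.Dart ↦ d.fst)]
  refine sum_congr rfl fun v _ ↦ ?_
  rw [← G.dart_fst_fiber_card_eq_degree, ← sum_const]
  exact sum_congr rfl fun d hd ↦ congrArg f (mem_filter.mp hd).2

theorem sum_dart_snd {M : Type*} [AddCommMonoid M] (f : V → M) :
    ∑ d : G.Dart, f d.snd = ∑ v, G.degree v • f v := by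
  rw [← sum_dart_fst]
  exact Equiv.sum_comp Dart.symm_involutive.toPerm fun d : G.Dart ↦ f d.fst

variable {G} in
theorem card_darts_within_clique [DecidableEq V] {s : Finset V} (hs : G.IsClique s) :
    #{d : G.Dart | d.fst ∈ s ∧ d.snd ∈ s} = #s * (#s - 1) := by
  have himage : ({d : G.Dart | d.fst ∈ s ∧ d.snd ∈ s} : Finset G.Dart).image Dart.toProd =
      s.offDiag := by
    ext ⟨u, v⟩
    simp only [mem_image, mem_filter_univ, mem_offDiag]
    constructor
    · rintro ⟨d, ⟨hu, hv⟩, hd⟩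
      obtain ⟨rfl, rfl⟩ := Prod.ext_iff.mp hd
      exact ⟨hu, hv, d.adj.ne⟩
    · rintro ⟨hu, hv, huv⟩
      exact ⟨⟨(u, v), hs hu hv huv⟩, ⟨hu, hv⟩, rfl⟩
  rw [← card_image_of_injective _ Dart.toProd_injective, himage, offDiag_card, Nat.mul_sub_one]

end Darts

section Goodman

variable {V : Type*} [Fintype V] [DecidableEq V] (G : SimpleGraph V) [DecidableRel G.Adj]

theorem degree_add_degree_le (u v : V) :
    G.degree u + G.degree v ≤ Fintype.card V + #(G.neighborFinset u ∩ G.neighborFinset v) := by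
  rw [← card_neighborFinset_eq_degree, ← card_neighborFinset_eq_degree,
    ← card_union_add_card_inter]
  gcongr
  exact card_le_univ _

variable {G} in
theorem card_triangles_through_edge {u v : V} (huv : G.Adj u v) :
    #{s ∈ G.cliqueFinset 3 | u ∈ s ∧ v ∈ s} = #(G.neighborFinset u ∩ G.neighborFinset v) := by
  symm
  refine card_bij (fun w _ ↦ {u, v, w}) ?_ ?_ ?_
  · intro w hw
    simp_all [is3Clique_triple_iff]
  · intro w hw w' _ heq
    have : w ∈ ({u, v, w'} : Finset V) := heq ▸ by simp
    simp only [mem_inter, mem_neighborFinset] at hw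
    simpa [hw.1.ne', hw.2.ne'] using this
  · intro s hs
    simp only [mem_filter, mem_cliqueFinset_iff] at hs
    obtain ⟨hs, hu, hv⟩ := hs
    obtain ⟨w, hw⟩ : ∃ w, s \ {u, v} = {w} := by
      rw [← card_eq_one, card_sdiff_of_subset (by grind), hs.card_eq, card_pair huv.ne]
    obtain rfl : {u, v, w} = s := by grind
    exact ⟨w, by simp_all [is3Clique_triple_iff], rfl⟩

theorem sum_dart_card_inter_neighborFinset :
    ∑ d : G.Dart, #(G.neighborFinset d.fst ∩ G.neighborFinset d.snd) =
      6 * #(G.cliqueFinset 3) := by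
  calc ∑ d : G.Dart, #(G.neighborFinset d.fst ∩ G.neighborFinset d.snd)
      = ∑ d : G.Dart, #{s ∈ G.cliqueFinset 3 | d.fst ∈ s ∧ d.snd ∈ s} :=
        sum_congr rfl fun d _ ↦ (card_triangles_through_edge d.adj).symm
    _ = ∑ s ∈ G.cliqueFinset 3, #{d : G.Dart | d.fst ∈ s ∧ d.snd ∈ s} := by
        simp only [card_filter]; exact sum_comm
    _ = ∑ _s ∈ G.cliqueFinset 3, 6 := by
        refine sum_congr rfl fun s hs ↦ ?_
        have hs := mem_cliqueFinset_iff.mp hs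
        rw [card_darts_within_clique hs.isClique, hs.card_eq]
    _ = 6 * #(G.cliqueFinset 3) := by rw [sum_const, smul_eq_mul, mul_comm]

theorem sum_degree_sq_le :
    ∑ v, G.degree v ^ 2 ≤ #G.edgeFinset * Fintype.card V + 3 * #(G.cliqueFinset 3) := by
  suffices 2 * ∑ v, G.degree v ^ 2 ≤
      2 * (#G.edgeFinset * Fintype.card V + 3 * #(G.cliqueFinset 3)) by lia
  calc 2 * ∑ v, G.degree v ^ 2
      = ∑ d : G.Dart, (G.degree d.fst + G.degree d.snd) := by
        rw [sum_add_distrib, sum_dart_fst G fun v ↦ G.degree v, sum_dart_snd G fun v ↦ G.degree v]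
        simp only [smul_eq_mul, ← sq, ← two_mul]
    _ ≤ ∑ d : G.Dart,
          (Fintype.card V + #(G.neighborFinset d.fst ∩ G.neighborFinset d.snd)) :=
        sum_le_sum fun d _ ↦ degree_add_degree_le G d.fst d.snd
    _ = 2 * #G.edgeFinset * Fintype.card V + 6 * #(G.cliqueFinset 3) := by
        rw [sum_add_distrib, sum_const, card_univ, dart_card_eq_twice_card_edges, smul_eq_mul,
          sum_dart_card_inter_neighborFinset]
    _ = _ := by ring

theorem goodman_inequality :
    4 * #G.edgeFinset ^ 2 ≤
      Fintype.card V ^ 2 * #G.edgeFinset + 3 * Fintype.card V * #(G.cliqueFinset 3) := by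
  calc 4 * #G.edgeFinset ^ 2
      = (∑ v, G.degree v) ^ 2 := by rw [G.sum_degrees_eq_twice_card_edges]; ring
    _ ≤ Fintype.card V * ∑ v, G.degree v ^ 2 := sq_sum_le_card_mul_sum_sq
    _ ≤ Fintype.card V * (#G.edgeFinset * Fintype.card V + 3 * #(G.cliqueFinset 3)) := by
        gcongr
        exact sum_degree_sq_le G
    _ = _ := by ring

end Goodman

theorem cube_le_of_goodman_of_four_le {n m t α : ℝ} (hn : 4 ≤ n) (hα : 2 / 3 ≤ α)
    (hm : α * (n * (n - 1) / 2) ≤ m) (hgoodman : 4 * m ^ 2 ≤ n ^ 2 * m + 3 * n * t) :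
    (3 * α - 2) / 27 * n ^ 3 ≤ t := by
  have hedges : 3 / 8 * α * n ^ 2 ≤ m := by
    have := mul_nonneg (show 0 ≤ α * n by nlinarith) (sub_nonneg.mpr hn)
    linarith
  have hexcess : (3 * α - 2) / 2 * n ^ 2 ≤ 4 * m - n ^ 2 := by linarith
  have hexcess_nonneg : 0 ≤ (3 * α - 2) / 2 * n ^ 2 := mul_nonneg (by linarith) (sq_nonneg n)
  have hscaled : 3 * n * ((3 * α - 2) / 27 * n ^ 3) ≤ 3 * n * t :=
    calc 3 * n * ((3 * α - 2) / 27 * n ^ 3)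
        = 2 / 9 * n ^ 2 * ((3 * α - 2) / 2 * n ^ 2) := by ring
      _ ≤ m * (4 * m - n ^ 2) := by
          refine mul_le_mul ?_ hexcess hexcess_nonneg ?_ <;> nlinarith [sq_nonneg n]
      _ ≤ 3 * n * t := by linarith
  exact le_of_mul_le_mul_left hscaled (by linarith)

theorem card_edgeFinset_le_card_triangles_add_two {V : Type*} [Fintype V] [DecidableEq V]
    (G : SimpleGraph V) [DecidableRel G.Adj] (hV : Fintype.card V = 3) :
    #G.edgeFinset ≤ #(G.cliqueFinset 3) + 2 := by
  have hm : #G.edgeFinset ≤ 3 := by simpa [hV] using G.card_edgeFinset_le_card_choose_two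
  have hgoodman := goodman_inequality G
  rw [hV] at hgoodman
  interval_cases #G.edgeFinset <;> omega

/-- The factor `1 / 27` is forced by the triangle itself, where equality holds for `α = 1`. -/
theorem supersaturation_triangles_general {V : Type*} [Fintype V] (G : SimpleGraph V) {α : ℝ}
    (hV : 3 ≤ Fintype.card V)
    (hG : α * ((Fintype.card V : ℝ) * ((Fintype.card V : ℝ) - 1) / 2) ≤ (G.edgeSet.ncard : ℝ)) :
    (3 * α - 2) / 27 * (Fintype.card V : ℝ) ^ 3 ≤ ((G.cliqueSet 3).ncard : ℝ) := by
  classical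
  rw [← coe_edgeFinset, Set.ncard_coe_finset] at hG
  rw [← coe_cliqueFinset, Set.ncard_coe_finset]
  rcases le_total α (2 / 3) with hα | hα
  · exact (mul_nonpos_of_nonpos_of_nonneg (by linarith) (by positivity)).trans (Nat.cast_nonneg _)
  rcases hV.eq_or_lt' with hV | hV
  · have hm : (#G.edgeFinset : ℝ) ≤ #(G.cliqueFinset 3) + 2 := by
      exact_mod_cast card_edgeFinset_le_card_triangles_add_two G hV
    rw [hV] at hG ⊢
    push_cast at hG ⊢
    linarith
  · exact cube_le_of_goodman_of_four_le (by exact_mod_cast hV) hα hG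
      (by exact_mod_cast goodman_inequality G)

theorem supersaturation_triangles :
    ∃ c : ℝ, 0 < c ∧
      ∀ (n : ℕ), 3 ≤ n → ∀ G : SimpleGraph (Fin n),
        (3 / 4 : ℝ) * ((n : ℝ) * ((n : ℝ) - 1) / 2) ≤ (G.edgeSet.ncard : ℝ) →
          c * (n : ℝ) ^ 3 ≤
            ({s : Finset (Fin n) | s.card = 3 ∧
                ∀ x ∈ s, ∀ y ∈ s, x ≠ y → G.Adj x y}.ncard : ℝ) := by
  refine ⟨(3 * (3 / 4) - 2) / 27, by norm_num, fun n hn G hG ↦ ?_⟩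
  simpa [cliqueSet, isNClique_iff, IsClique, Set.Pairwise, and_comm] using
    supersaturation_triangles_general G (by simpa using hn) (by simpa using hG)
end
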